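/- arXiv:1805.11980 — 2 statements merged into one kernel-verified Lean document; each statement's English description precedes it below -/
import Mathlib

section
/- Let A = σ(R)⟨x_1,…,x_n⟩ be a skew PBW extension of a reversible and (Σ,Δ)-compatible ring R, and assume the elements c_{i,j} of condition (iv) are central in R. Then an element f = a_0 + a_1X_1 + ⋯ + a_mX_m of A (a_i ∈ R, X_i pairwise distinct standard monomials) is nilpotent in A if and only if a_i is nilpotent in R for every 0 ≤ i ≤ m. -/
/-! Two facts about a skew PBW extension `A` of a reversible `(Σ,Δ)`-compatible ring `R` carry the
proof.

* A nilpotent `r ∈ R` lies in a nil two-sided ideal of `A`. Reversibility and compatibility show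
  that `ab = 0` in `R` forces `a A b = 0` (`mul_mid_scalar`), so the right annihilators in `A` of
  the powers of `r` are two-sided ideals. They increase from `0` to `A` as the exponent runs from
  `0` to the nilpotency index, and the elements of `A` that push each of them into the previous one
  form a two-sided ideal (`shiftIdeal`) that contains `r` and consists of nilpotent elements. Hence
  adding or removing a term `r x^α` with `r` nilpotent does not affect nilpotency
  (`isNilpotent_add`). Adding the terms one at a time gives one implication.

* The leading coefficient of a nilpotent element is nilpotent (`isNilpotent_leading`). Comparing
  coefficients in degree two gives `c_{j,i} c_{i,j} = 1` for `i ≤ j`, so the central elements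
  `c_{i,j}` are units, and reordering a word in the variables multiplies it by a unit modulo lower
  total degree (`word_perm`). For the degree-lexicographic order the product of elements with
  leading terms `a x^α` and `b x^β` therefore has coefficient `a σ^α(b) u`, with `u` a unit, at
  `x^{α+β}` (`coef_mul`). By compatibility the twists `σ^α` can be dropped when deciding whether
  such a product vanishes, so `f ^ k = 0` implies `a ^ k = 0` for the leading coefficient `a`.

Removing leading terms one at a time then yields the other implication.
-/


open scoped BigOperators

/-- Iterated "power composition": given a family of maps `f i` and multiplicities `k i`,
`iterPow f k = (f 0)^[k 0] ∘ (f 1)^[k 1] ∘ ⋯ ∘ (f (n-1))^[k (n-1)]`.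
For a family of endomorphisms `σ` this is `σ^α = σ₁^{α₁} ∘ ⋯ ∘ σₙ^{αₙ}`. -/
def iterPow {α : Type*} {n : ℕ} (f : Fin n → α → α) (k : Fin n → ℕ) : α → α :=
  (((List.finRange n).map fun i => (f i)^[k i]).foldr (· ∘ ·) id)

/-- A skew PBW extension `A = σ(R)⟨x₁,…,xₙ⟩` of a ring `R`. -/
structure SkewPBW (R A : Type*) [Ring R] [Ring A] (n : ℕ) where
  /-- the inclusion `R ⊆ A` (a ring embedding) -/
  ι : R →+* A
  ι_inj : Function.Injective ι
  /-- the variables `x₁,…,xₙ` -/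
  x : Fin n → A
  /-- `A` is a free left `R`-module with basis the standard monomials
  `x^α = x₁^{α₁} ⋯ xₙ^{αₙ}`: every element of `A` is a unique finite
  `R`-linear combination of standard monomials. -/
  free : Function.Bijective
    (fun c : (Fin n → ℕ) →₀ R =>
      c.sum fun α r => ι r * (((List.finRange n).map fun i => x i ^ α i).prod))
  /-- condition (iii): for each `i` and each nonzero `r ∈ R` there is a nonzero
  `c_{i,r} ∈ R` with `xᵢ r − c_{i,r} xᵢ ∈ R` -/
  lin : ∀ (i : Fin n) (r : R), r ≠ 0 → ∃ cr : R, cr ≠ 0 ∧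
    ∃ r' : R, x i * ι r - ι cr * x i = ι r'
  /-- the constants `c_{i,j}` of condition (iv) -/
  c : Fin n → Fin n → R
  c_ne : ∀ i j, c i j ≠ 0
  /-- condition (iv): `xⱼ xᵢ − c_{i,j} xᵢ xⱼ ∈ R + R x₁ + ⋯ + R xₙ` -/
  quad : ∀ i j, ∃ (r₀ : R) (r : Fin n → R),
    x j * x i - ι (c i j) * (x i * x j) = ι r₀ + ∑ k, ι (r k) * x k
  /-- the injective endomorphisms `σᵢ` -/
  σ : Fin n → R →+* R
  σ_inj : ∀ i, Function.Injective (σ i)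
  /-- the `σᵢ`-derivations `δᵢ` -/
  δ : Fin n → R → R
  δ_add : ∀ (i : Fin n) (a b : R), δ i (a + b) = δ i a + δ i b
  δ_leibniz : ∀ (i : Fin n) (a b : R), δ i (a * b) = σ i a * δ i b + δ i a * b
  /-- the fundamental relation `xᵢ r = σᵢ(r) xᵢ + δᵢ(r)` -/
  comm : ∀ (i : Fin n) (r : R), x i * ι r = ι (σ i r) * x i + ι (δ i r)

namespace SkewPBW

variable {R A : Type*} [Ring R] [Ring A] {n : ℕ}

/-- The standard monomial `x^α = x₁^{α₁} ⋯ xₙ^{αₙ}`. -/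
def mono (S : SkewPBW R A n) (α : Fin n → ℕ) : A :=
  ((List.finRange n).map fun i => S.x i ^ α i).prod

/-- `σ^α = σ₁^{α₁} ∘ ⋯ ∘ σₙ^{αₙ}`. -/
def sigmaPow (S : SkewPBW R A n) (α : Fin n → ℕ) : R → R :=
  iterPow (fun i => ⇑(S.σ i)) α

/-- `δ^α = δ₁^{α₁} ∘ ⋯ ∘ δₙ^{αₙ}`. -/
def deltaPow (S : SkewPBW R A n) (α : Fin n → ℕ) : R → R :=
  iterPow S.δ α

/-- `R` is `Σ`-compatible: `a σ^α(b) = 0 ↔ a b = 0`. -/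
def SigmaCompatible (S : SkewPBW R A n) : Prop :=
  ∀ (a b : R) (α : Fin n → ℕ), a * S.sigmaPow α b = 0 ↔ a * b = 0

/-- `R` is `Δ`-compatible: `a b = 0 → a δ^β(b) = 0`. -/
def DeltaCompatible (S : SkewPBW R A n) : Prop :=
  ∀ a b : R, a * b = 0 → ∀ β : Fin n → ℕ, a * S.deltaPow β b = 0

/-- `R` is `(Σ,Δ)`-compatible. -/
def SigmaDeltaCompatible (S : SkewPBW R A n) : Prop :=
  S.SigmaCompatible ∧ S.DeltaCompatible

/-- The elements `c_{i,j}` of condition (iv) are central in `R`. -/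
def CCentral (S : SkewPBW R A n) : Prop :=
  ∀ (i j : Fin n) (r : R), S.c i j * r = r * S.c i j

/-- `R` is `(Σ,Δ)`-skew Armendariz with respect to `A`:
if `fg = 0` then `aᵢXᵢ · bⱼYⱼ = 0` for all coefficients/monomials of `f` and `g`. -/
def SDSkewArmendariz (S : SkewPBW R A n) : Prop :=
  ∀ (t s : ℕ) (a : Fin (t + 1) → R) (X : Fin (t + 1) → Fin n → ℕ)
    (b : Fin (s + 1) → R) (Y : Fin (s + 1) → Fin n → ℕ),
    Function.Injective X → Function.Injective Y →
    (∑ i, S.ι (a i) * S.mono (X i)) * (∑ j, S.ι (b j) * S.mono (Y j)) = 0 →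
    ∀ i j, (S.ι (a i) * S.mono (X i)) * (S.ι (b j) * S.mono (Y j)) = 0

/-- `R` is `Σ`-skew Armendariz with respect to `A`:
if `fg = 0` then `aᵢ σ^{αᵢ}(bⱼ) = 0` where `αᵢ = exp(Xᵢ)`. -/
def SigmaSkewArmendariz (S : SkewPBW R A n) : Prop :=
  ∀ (m t : ℕ) (a : Fin (m + 1) → R) (X : Fin (m + 1) → Fin n → ℕ)
    (b : Fin (t + 1) → R) (Y : Fin (t + 1) → Fin n → ℕ),
    Function.Injective X → Function.Injective Y →
    (∑ i, S.ι (a i) * S.mono (X i)) * (∑ j, S.ι (b j) * S.mono (Y j)) = 0 →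
    ∀ i j, a i * S.sigmaPow (X i) (b j) = 0

/-- `R` is skew `Π`-Armendariz with respect to `A`:
if `fg` is nilpotent in `A`, then `aᵢ bⱼ` is nilpotent in `R` for all `i, j`. -/
def SkewPiArmendariz (S : SkewPBW R A n) : Prop :=
  ∀ (m t : ℕ) (a : Fin (m + 1) → R) (X : Fin (m + 1) → Fin n → ℕ)
    (b : Fin (t + 1) → R) (Y : Fin (t + 1) → Fin n → ℕ),
    Function.Injective X → Function.Injective Y →
    IsNilpotent ((∑ i, S.ι (a i) * S.mono (X i)) * (∑ j, S.ι (b j) * S.mono (Y j))) →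
    ∀ i j, IsNilpotent (a i * b j)

end SkewPBW

/-- A ring is reversible if `a b = 0` implies `b a = 0`. -/
def IsReversible (R : Type*) [Ring R] : Prop :=
  ∀ a b : R, a * b = 0 → b * a = 0


namespace SkewPBW

variable {R A : Type*} [Ring R] [Ring A] {n : ℕ}

/-! ### Coefficients with respect to the standard monomials -/

/-- The bijection of `S.free` as an additive map. -/
noncomputable def comb (S : SkewPBW R A n) : ((Fin n → ℕ) →₀ R) →+ A :=
  Finsupp.liftAddHom fun α => (AddMonoidHom.mulRight (S.mono α)).comp S.ι.toAddMonoidHom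

theorem comb_single (S : SkewPBW R A n) (α : Fin n → ℕ) (r : R) :
    S.comb (Finsupp.single α r) = S.ι r * S.mono α := by
  simp [comb]

theorem comb_apply (S : SkewPBW R A n) (c : (Fin n → ℕ) →₀ R) :
    S.comb c = c.sum fun α r => S.ι r * S.mono α := rfl

/-- The coordinates of an element of `A` in the basis of standard monomials. -/
noncomputable def coef (S : SkewPBW R A n) : A ≃+ ((Fin n → ℕ) →₀ R) :=
  (AddEquiv.ofBijective S.comb S.free).symm

theorem coef_term (S : SkewPBW R A n) (r : R) (α : Fin n → ℕ) :
    S.coef (S.ι r * S.mono α) = Finsupp.single α r := by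
  rw [← comb_single]
  exact (AddEquiv.ofBijective S.comb S.free).symm_apply_apply _

theorem sum_coef (S : SkewPBW R A n) (f : A) :
    ∑ α ∈ (S.coef f).support, S.ι (S.coef f α) * S.mono α = f :=
  (AddEquiv.ofBijective S.comb S.free).apply_symm_apply f

theorem coef_smul (S : SkewPBW R A n) (r : R) (f : A) (α : Fin n → ℕ) :
    S.coef (S.ι r * f) α = r * S.coef f α := by
  conv_lhs => rw [← S.sum_coef f]
  conv_rhs => rw [← S.sum_coef f]
  simp_rw [Finset.mul_sum, ← mul_assoc, ← map_mul, map_sum, coef_term, Finsupp.finsetSum_apply,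
    Finset.mul_sum]
  refine Finset.sum_congr rfl fun β _ => ?_
  by_cases h : β = α <;> simp [h]

/-! ### Words in the variables -/

/-- The product `x_{i₁} ⋯ x_{iₖ}` attached to a word `[i₁, …, iₖ]`. -/
def word (S : SkewPBW R A n) (l : List (Fin n)) : A := (l.map S.x).prod

/-- The composite `σ_{i₁} ∘ ⋯ ∘ σ_{iₖ}` attached to a word `[i₁, …, iₖ]`. -/
def sg (S : SkewPBW R A n) (l : List (Fin n)) (r : R) : R := l.foldr (fun i s => S.σ i s) r

@[simp] theorem word_nil (S : SkewPBW R A n) : S.word [] = 1 := rfl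

@[simp] theorem word_cons (S : SkewPBW R A n) (i : Fin n) (l : List (Fin n)) :
    S.word (i :: l) = S.x i * S.word l := by simp [word]

theorem word_append (S : SkewPBW R A n) (l l' : List (Fin n)) :
    S.word (l ++ l') = S.word l * S.word l' := by simp [word]

/-- The nondecreasing word in which each `i` occurs `α i` times. -/
def std (α : Fin n → ℕ) : List (Fin n) := (List.finRange n).flatMap fun i => List.replicate (α i) i

theorem word_std (S : SkewPBW R A n) (α : Fin n → ℕ) : S.word (std α) = S.mono α := by
  unfold word std mono
  rw [List.map_flatMap]
  induction List.finRange n with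
  | nil => simp
  | cons i l ih =>
    rw [List.flatMap_cons, List.prod_append, ih, List.map_replicate, List.prod_replicate,
      List.map_cons, List.prod_cons]

theorem count_std (α : Fin n → ℕ) (i : Fin n) : (std α).count i = α i := by
  unfold std
  rw [List.count_flatMap, ← Fin.sum_univ_def]
  simp [List.count_replicate]

theorem length_std (α : Fin n → ℕ) : (std α).length = ∑ i, α i := by
  unfold std
  rw [List.length_flatMap, Fin.sum_univ_def]
  simp

theorem pairwise_std (α : Fin n → ℕ) : (std α).Pairwise (· ≤ ·) := by
  unfold std
  rw [List.pairwise_flatMap]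
  refine ⟨fun i _ => List.pairwise_replicate.2 (Or.inr le_rfl), ?_⟩
  refine (List.pairwise_lt_finRange n).imp fun {i j} hij a ha b hb => ?_
  rw [List.eq_of_mem_replicate ha, List.eq_of_mem_replicate hb]
  exact hij.le

theorem perm_std_count (l : List (Fin n)) : l.Perm (std fun i => l.count i) :=
  List.perm_iff_count.2 fun i => (count_std (fun i => l.count i) i).symm

theorem mono_count (S : SkewPBW R A n) {l : List (Fin n)} (hl : l.Pairwise (· ≤ ·)) :
    S.mono (fun i => l.count i) = S.word l := by
  rw [← word_std]
  congr 1
  exact ((perm_std_count l).eq_of_pairwise (fun _ _ _ _ => le_antisymm) hl (pairwise_std _)).symm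

theorem sum_count (l : List (Fin n)) : ∑ i, l.count i = l.length := by
  rw [← length_std, (perm_std_count l).length_eq]

/-! ### The filtration by total degree -/

/-- Left `R`-combinations of words of length `< d`. -/
def filt (S : SkewPBW R A n) (d : ℕ) : AddSubgroup A :=
  AddSubgroup.closure {f | ∃ (r : R) (l : List (Fin n)), l.length < d ∧ f = S.ι r * S.word l}

theorem term_mem (S : SkewPBW R A n) {d : ℕ} (r : R) {l : List (Fin n)} (h : l.length < d) :
    S.ι r * S.word l ∈ S.filt d := AddSubgroup.subset_closure ⟨r, l, h, rfl⟩

theorem filt_le (S : SkewPBW R A n) {d : ℕ} {H : AddSubgroup A}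
    (h : ∀ (r : R) (l : List (Fin n)), l.length < d → S.ι r * S.word l ∈ H) : S.filt d ≤ H := by
  refine (AddSubgroup.closure_le _).2 ?_
  rintro _ ⟨r, l, hl, rfl⟩
  exact h r l hl

theorem smul_mem (S : SkewPBW R A n) {d : ℕ} (s : R) {f : A} (hf : f ∈ S.filt d) :
    S.ι s * f ∈ S.filt d := by
  refine S.filt_le (H := (S.filt d).comap (AddMonoidHom.mulLeft (S.ι s))) (fun r l hl => ?_) hf
  change S.ι s * (S.ι r * S.word l) ∈ S.filt d
  rw [← mul_assoc, ← map_mul]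
  exact S.term_mem _ hl

theorem mul_word_mem (S : SkewPBW R A n) {d : ℕ} {f : A} (hf : f ∈ S.filt d)
    (l' : List (Fin n)) : f * S.word l' ∈ S.filt (d + l'.length) := by
  refine S.filt_le (H := (S.filt (d + l'.length)).comap (AddMonoidHom.mulRight (S.word l')))
    (fun r l hl => ?_) hf
  change S.ι r * S.word l * S.word l' ∈ S.filt _
  rw [mul_assoc, ← word_append]
  exact S.term_mem _ (by simp; omega)

theorem x_mul_mem (S : SkewPBW R A n) {d : ℕ} (i : Fin n) {f : A} (hf : f ∈ S.filt d) :
    S.x i * f ∈ S.filt (d + 1) := by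
  refine S.filt_le (H := (S.filt (d + 1)).comap (AddMonoidHom.mulLeft (S.x i)))
    (fun r l hl => ?_) hf
  change S.x i * (S.ι r * S.word l) ∈ S.filt _
  rw [← mul_assoc, S.comm, add_mul, mul_assoc, ← word_cons]
  exact add_mem (S.term_mem _ (by simp; omega)) (S.term_mem _ (by omega))

/-- Scalars move to the left past a word, at the cost of lower-degree terms. -/
theorem word_mul_sub_mem (S : SkewPBW R A n) (l : List (Fin n)) (r : R) :
    S.word l * S.ι r - S.ι (S.sg l r) * S.word l ∈ S.filt l.length := by
  induction l with
  | nil => simp [sg]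
  | cons i l ih =>
    have h1 := S.x_mul_mem i ih
    have h2 := S.term_mem (d := l.length + 1) (S.δ i (S.sg l r)) (l := l) (by omega)
    rw [List.length_cons]
    convert add_mem h1 h2 using 1
    rw [mul_sub, ← mul_assoc (S.x i) (S.ι _), S.comm, word_cons]
    simp only [sg, List.foldr_cons]
    noncomm_ring

theorem coef_filt_two (S : SkewPBW R A n) {f : A} (hf : f ∈ S.filt 2) {δ : Fin n → ℕ}
    (hδ : 2 ≤ ∑ i, δ i) : S.coef f δ = 0 := by
  refine S.filt_le (H := ((Finsupp.applyAddHom δ).comp S.coef.toAddMonoidHom).ker)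
    (fun r l hl => ?_) hf
  change S.coef (S.ι r * S.word l) δ = 0
  have hs : l.Pairwise (· ≤ ·) := by
    match l, hl with
    | [], _ => simp
    | [a], _ => simp
    | a :: b :: t, h => simp at h
  rw [← S.mono_count hs, coef_term, Finsupp.single_apply, if_neg]
  rintro rfl
  rw [sum_count] at hδ
  omega

theorem swap_mem (S : SkewPBW R A n) (i j : Fin n) :
    S.x j * S.x i - S.ι (S.c i j) * (S.x i * S.x j) ∈ S.filt 2 := by
  obtain ⟨r₀, r, h⟩ := S.quad i j
  rw [h]
  refine add_mem ?_ (sum_mem fun k _ => ?_)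
  · simpa using S.term_mem (d := 2) r₀ (l := []) (by simp)
  · simpa using S.term_mem (d := 2) (r k) (l := [k]) (by simp)

/-- Applying the quadratic relation twice to `xᵢxⱼ` and comparing coefficients in degree two
shows that `c_{j,i} c_{i,j} = 1`. -/
theorem c_mul_c (S : SkewPBW R A n) {i j : Fin n} (hij : i ≤ j) : S.c j i * S.c i j = 1 := by
  have h : S.ι (1 - S.c j i * S.c i j) * S.word [i, j] ∈ S.filt 2 := by
    convert add_mem (S.swap_mem j i) (S.smul_mem (S.c j i) (S.swap_mem i j)) using 1
    simp only [word_cons, word_nil, map_sub, map_mul, map_one]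
    noncomm_ring
  have hs : [i, j].Pairwise (· ≤ ·) := by simpa using hij
  have h0 := S.coef_filt_two h (δ := fun k => [i, j].count k) (by rw [sum_count]; simp)
  rw [← S.mono_count hs, coef_term, Finsupp.single_eq_same, sub_eq_zero] at h0
  exact h0.symm

theorem isUnit_c (S : SkewPBW R A n) (hc : S.CCentral) (i j : Fin n) : IsUnit (S.c i j) := by
  rcases le_total i j with h | h
  · exact ⟨⟨S.c i j, S.c j i, (hc i j _).trans (S.c_mul_c h), S.c_mul_c h⟩, rfl⟩
  · exact ⟨⟨S.c i j, S.c j i, S.c_mul_c h, (hc i j _).symm.trans (S.c_mul_c h)⟩, rfl⟩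

/-- Reordering the letters of a word multiplies it by a unit, up to lower-degree terms. -/
theorem word_perm (S : SkewPBW R A n) (hc : S.CCentral) {l l' : List (Fin n)} (h : l.Perm l') :
    ∃ u : R, IsUnit u ∧ S.word l - S.ι u * S.word l' ∈ S.filt l.length := by
  induction h with
  | nil => exact ⟨1, isUnit_one, by simp⟩
  | @cons i l l' hp ih =>
    obtain ⟨u, hu, h⟩ := ih
    refine ⟨S.σ i u, hu.map _, ?_⟩
    have h2 := S.term_mem (d := l.length + 1) (S.δ i u) (l := l') (by rw [hp.length_eq]; omega)
    rw [List.length_cons]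
    convert add_mem (S.x_mul_mem i h) h2 using 1
    rw [mul_sub, ← mul_assoc (S.x i) (S.ι _), S.comm, word_cons, word_cons]
    noncomm_ring
  | swap i j l =>
    refine ⟨S.c i j, S.isUnit_c hc i j, ?_⟩
    have h := S.mul_word_mem (S.swap_mem i j) l
    rw [add_comm] at h
    rw [List.length_cons, List.length_cons]
    convert h using 1
    simp only [word_cons]
    noncomm_ring
  | @trans l₁ l₂ l₃ hp₁ _ ih₁ ih₂ =>
    obtain ⟨u, hu, h⟩ := ih₁
    obtain ⟨v, hv, h'⟩ := ih₂
    refine ⟨u * v, hu.mul hv, ?_⟩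
    rw [← hp₁.length_eq] at h'
    convert add_mem h (S.smul_mem u h') using 1
    rw [map_mul]
    noncomm_ring

/-- Combinations of words of length `< d` have no coefficients in degrees `≥ d`. -/
theorem coef_filt (S : SkewPBW R A n) (hc : S.CCentral) {d : ℕ} {f : A} (hf : f ∈ S.filt d)
    {δ : Fin n → ℕ} (hδ : d ≤ ∑ i, δ i) : S.coef f δ = 0 := by
  induction d using Nat.strong_induction_on generalizing f with
  | _ d ih =>
    refine S.filt_le (H := ((Finsupp.applyAddHom δ).comp S.coef.toAddMonoidHom).ker)
      (fun r l hl => ?_) hf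
    change S.coef (S.ι r * S.word l) δ = 0
    obtain ⟨u, -, hu⟩ := S.word_perm hc (perm_std_count l)
    have h0 := ih l.length hl hu (by omega)
    rw [map_sub, Finsupp.sub_apply, sub_eq_zero, word_std, coef_term, Finsupp.single_apply,
      if_neg] at h0
    · rw [coef_smul, h0, mul_zero]
    · rintro rfl
      rw [sum_count] at hδ
      omega

/-! ### Leading coefficients for the degree-lexicographic order -/

/-- The exponent `α`, placed in a linearly ordered monoid so that the induced order on exponents is
degree-lexicographic. -/
def key (α : Fin n → ℕ) : ℕ ×ₗ Lex (Fin n → ℕ) := toLex (∑ i, α i, toLex α)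

theorem key_add (α β : Fin n → ℕ) : key (α + β) = key α + key β := by
  simp [key, Finset.sum_add_distrib, ← toLex_add]

theorem key_injective : Function.Injective (key (n := n)) := fun α β h => by
  have := congrArg (fun z => ofLex (ofLex z).2) h
  simpa [key] using this

theorem deg_le_of_key_le {α β : Fin n → ℕ} (h : key α ≤ key β) : ∑ i, α i ≤ ∑ i, β i := by
  rcases Prod.Lex.le_iff.1 h with h | h
  · exact h.le
  · exact h.1.le

theorem term_mul (S : SkewPBW R A n) (hc : S.CCentral) (γ γ' : Fin n → ℕ) :
    ∃ u : R, IsUnit u ∧ ∀ (a b : R) (δ : Fin n → ℕ), key (γ + γ') ≤ key δ →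
      S.coef ((S.ι a * S.mono γ) * (S.ι b * S.mono γ')) δ =
        Finsupp.single (γ + γ') (a * S.sg (std γ) b * u) δ := by
  have hp : (std γ ++ std γ').Perm (std (γ + γ')) :=
    List.perm_iff_count.2 fun i => by simp [count_std]
  obtain ⟨u, hu, h⟩ := S.word_perm hc hp
  refine ⟨u, hu, fun a b δ hδ => ?_⟩
  have h1 := S.smul_mem a (S.mul_word_mem (S.word_mul_sub_mem (std γ) b) (std γ'))
  have h2 := S.smul_mem (a * S.sg (std γ) b) h
  rw [List.length_append] at h2
  have h3 := S.coef_filt hc (add_mem h1 h2) (δ := δ) (by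
    rw [length_std, length_std, ← Finset.sum_add_distrib]
    exact deg_le_of_key_le hδ)
  rw [← S.coef_term, ← sub_eq_zero, ← Finsupp.sub_apply, ← map_sub, ← h3]
  congr 2
  simp only [← word_std, word_append, map_mul]
  noncomm_ring

/-- If `f` and `g` have all exponents at most `α` and `β` respectively, then `f * g` has all
exponents at most `α + β`, and its coefficient there is `a σ^α(b) u` with `u` a unit depending only
on `α` and `β`. -/
theorem coef_mul (S : SkewPBW R A n) (hc : S.CCentral) {f g : A} {α β : Fin n → ℕ}
    (hf : ∀ γ, key α < key γ → S.coef f γ = 0) (hg : ∀ γ, key β < key γ → S.coef g γ = 0) :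
    (∀ δ, key (α + β) < key δ → S.coef (f * g) δ = 0) ∧
    ∃ u, IsUnit u ∧
      S.coef (f * g) (α + β) = S.coef f α * S.sg (std α) (S.coef g β) * u := by
  have hexp : ∀ δ, S.coef (f * g) δ = ∑ γ ∈ (S.coef f).support, ∑ γ' ∈ (S.coef g).support,
      S.coef ((S.ι (S.coef f γ) * S.mono γ) * (S.ι (S.coef g γ') * S.mono γ')) δ := fun δ => by
    conv_lhs => rw [← S.sum_coef f, ← S.sum_coef g, Finset.sum_mul_sum]
    simp [map_sum, Finsupp.finsetSum_apply]
  have hf' : ∀ γ ∈ (S.coef f).support, key γ ≤ key α := fun γ h =>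
    not_lt.1 fun h' => Finsupp.mem_support_iff.1 h (hf γ h')
  have hg' : ∀ γ ∈ (S.coef g).support, key γ ≤ key β := fun γ h =>
    not_lt.1 fun h' => Finsupp.mem_support_iff.1 h (hg γ h')
  have hlt : ∀ γ γ' δ, key (γ + γ') < key δ → ∀ a b,
      S.coef ((S.ι a * S.mono γ) * (S.ι b * S.mono γ')) δ = 0 := fun γ γ' δ h a b => by
    obtain ⟨u, -, hu⟩ := S.term_mul hc γ γ'
    rw [hu a b δ h.le, Finsupp.single_apply, if_neg]
    rintro rfl
    exact h.ne rfl
  constructor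
  · intro δ hδ
    rw [hexp]
    refine Finset.sum_eq_zero fun γ hγ => Finset.sum_eq_zero fun γ' hγ' => hlt _ _ _ ?_ _ _
    refine lt_of_le_of_lt ?_ hδ
    rw [key_add, key_add]
    exact add_le_add (hf' γ hγ) (hg' γ' hγ')
  · obtain ⟨u, hu, h⟩ := S.term_mul hc α β
    refine ⟨u, hu, ?_⟩
    rw [hexp, Finset.sum_eq_single α, Finset.sum_eq_single β, h _ _ _ le_rfl,
      Finsupp.single_eq_same]
    · intro γ' hγ' hne
      refine hlt _ _ _ ?_ _ _
      rw [key_add, key_add]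
      exact add_lt_add_right ((hg' γ' hγ').lt_of_ne (key_injective.ne hne)) _
    · intro hz
      rw [Finsupp.notMem_support_iff.1 hz]
      simp
    · intro γ hγ hne
      refine Finset.sum_eq_zero fun γ' hγ' => hlt _ _ _ ?_ _ _
      rw [key_add, key_add]
      exact add_lt_add_of_lt_of_le ((hf' γ hγ).lt_of_ne (key_injective.ne hne)) (hg' γ' hγ')
    · intro hz
      rw [Finsupp.notMem_support_iff.1 hz]
      simp

/-! ### Consequences of compatibility and reversibility -/

theorem iterPow_single {β : Type*} (f : Fin n → β → β) (i : Fin n) :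
    iterPow f (Pi.single i 1) = f i := by
  unfold iterPow
  have key : ∀ L : List (Fin n), L.Nodup →
      ((L.map fun j => (f j)^[(Pi.single i 1 : Fin n → ℕ) j]).foldr (· ∘ ·) id) =
        if i ∈ L then f i else id := by
    intro L hL
    induction L with
    | nil => simp
    | cons j L ih =>
      rw [List.nodup_cons] at hL
      rw [List.map_cons, List.foldr_cons, ih hL.2]
      by_cases hij : i = j
      · subst hij
        simp [hL.1]
      · simp [hij]
  rw [key _ (List.nodup_finRange n), if_pos (List.mem_finRange i)]

theorem mul_sigma (S : SkewPBW R A n) (h : S.SigmaCompatible) (i : Fin n) (a b : R) :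
    a * S.σ i b = 0 ↔ a * b = 0 := by
  simpa [sigmaPow, iterPow_single] using h a b (Pi.single i 1)

theorem mul_delta (S : SkewPBW R A n) (h : S.DeltaCompatible) (i : Fin n) {a b : R}
    (hab : a * b = 0) : a * S.δ i b = 0 := by
  simpa [deltaPow, iterPow_single] using h a b hab (Pi.single i 1)

theorem mul_sg (S : SkewPBW R A n) (h : S.SigmaCompatible) (l : List (Fin n)) (a b : R) :
    a * S.sg l b = 0 ↔ a * b = 0 := by
  induction l with
  | nil => rfl
  | cons i l ih => exact (S.mul_sigma h i a _).trans ih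

theorem mul_mid {R : Type*} [Ring R] (hrev : IsReversible R) {a b : R} (h : a * b = 0) (r : R) :
    a * (r * b) = 0 := by
  rw [← mul_assoc]
  refine hrev _ _ ?_
  rw [← mul_assoc, hrev _ _ h, zero_mul]

/-- If `ab = 0` in `R`, then `a A b = 0`. -/
theorem mul_mid_scalar (S : SkewPBW R A n) (hrev : IsReversible R)
    (hcomp : S.SigmaDeltaCompatible) {a b : R} (h : a * b = 0) (v : A) :
    S.ι a * v * S.ι b = 0 := by
  have hw : ∀ (l : List (Fin n)) (b : R), a * b = 0 →
      ∀ r, S.ι a * (S.ι r * S.word l) * S.ι b = 0 := by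
    intro l
    induction l using List.reverseRecOn with
    | nil =>
      intro b hb r
      rw [word_nil, mul_one, mul_assoc, ← map_mul, ← map_mul, mul_mid hrev hb, map_zero]
    | append_singleton l i ih =>
      intro b hb r
      have h1 := ih _ ((S.mul_sigma hcomp.1 i a b).2 hb) r
      have h2 := ih _ (S.mul_delta hcomp.2 i hb) r
      calc S.ι a * (S.ι r * S.word (l ++ [i])) * S.ι b
          = S.ι a * (S.ι r * S.word l) * (S.x i * S.ι b) := by
            simp [word_append, mul_assoc]
        _ = S.ι a * (S.ι r * S.word l) * S.ι (S.σ i b) * S.x i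
            + S.ι a * (S.ι r * S.word l) * S.ι (S.δ i b) := by
            rw [S.comm, mul_add, ← mul_assoc _ (S.ι _) (S.x i)]
        _ = 0 := by rw [h1, h2, zero_mul, add_zero]
  rw [← S.sum_coef v, Finset.mul_sum, Finset.sum_mul]
  refine Finset.sum_eq_zero fun γ _ => ?_
  rw [← word_std]
  exact hw _ _ h _

/-- The right annihilator in `A` of a scalar is a left ideal. -/
theorem mul_mid_right (S : SkewPBW R A n) (hrev : IsReversible R)
    (hcomp : S.SigmaDeltaCompatible) {a : R} {u : A} (h : S.ι a * u = 0) (v : A) :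
    S.ι a * (v * u) = 0 := by
  have h0 : ∀ γ, a * S.coef u γ = 0 := fun γ => by rw [← coef_smul, h]; simp
  rw [← S.sum_coef u, Finset.mul_sum, Finset.mul_sum]
  refine Finset.sum_eq_zero fun γ _ => ?_
  rw [← mul_assoc, ← mul_assoc, S.mul_mid_scalar hrev hcomp (h0 γ), zero_mul]

/-! ### A nil ideal containing a given nilpotent scalar -/

/-- The elements of `A` mapping the right annihilator of `r ^ (j + 1)` into that of `r ^ j`, for
every `j`. -/
def shiftIdeal (S : SkewPBW R A n) (r : R) : AddSubgroup A where
  carrier := {h | ∀ (j : ℕ) (u : A), S.ι (r ^ (j + 1)) * u = 0 → S.ι (r ^ j) * (h * u) = 0}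
  zero_mem' := fun j u _ => by simp
  add_mem' := fun {p q} hp hq j u hu => by rw [add_mul, mul_add, hp j u hu, hq j u hu, add_zero]
  neg_mem' := fun {p} hp j u hu => by rw [neg_mul, mul_neg, hp j u hu, neg_zero]

theorem mem_shiftIdeal (S : SkewPBW R A n) (r : R) : S.ι r ∈ S.shiftIdeal r := fun j u hu => by
  rw [← mul_assoc, ← map_mul, ← pow_succ, hu]

theorem shiftIdeal_mul_right (S : SkewPBW R A n) (hrev : IsReversible R)
    (hcomp : S.SigmaDeltaCompatible) {r : R} {p : A} (hp : p ∈ S.shiftIdeal r) (v : A) :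
    p * v ∈ S.shiftIdeal r := fun j u hu => by
  rw [mul_assoc]
  exact hp j _ (S.mul_mid_right hrev hcomp hu v)

theorem shiftIdeal_mul_left (S : SkewPBW R A n) (hrev : IsReversible R)
    (hcomp : S.SigmaDeltaCompatible) {r : R} {p : A} (hp : p ∈ S.shiftIdeal r) (v : A) :
    v * p ∈ S.shiftIdeal r := fun j u hu => by
  rw [mul_assoc]
  exact S.mul_mid_right hrev hcomp (hp j u hu) v

theorem isNilpotent_of_mem (S : SkewPBW R A n) {r : R} (hr : IsNilpotent r) {p : A}
    (hp : p ∈ S.shiftIdeal r) : IsNilpotent p := by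
  obtain ⟨k, hk⟩ := hr
  have h : ∀ i, i ≤ k → S.ι (r ^ (k - i)) * p ^ i = 0 := by
    intro i
    induction i with
    | zero => intro _; simp [hk]
    | succ i ih =>
      intro hi
      rw [pow_succ']
      refine hp _ _ ?_
      rw [show k - (i + 1) + 1 = k - i by omega]
      exact ih (by omega)
  exact ⟨k, by simpa using h k le_rfl⟩

/-- Adding an element of a nil ideal preserves nilpotency. -/
theorem isNilpotent_add (S : SkewPBW R A n) (hrev : IsReversible R)
    (hcomp : S.SigmaDeltaCompatible) {r : R} (hr : IsNilpotent r) {g p : A}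
    (hg : IsNilpotent g) (hp : p ∈ S.shiftIdeal r) : IsNilpotent (g + p) := by
  have h : ∀ k, (g + p) ^ k - g ^ k ∈ S.shiftIdeal r := by
    intro k
    induction k with
    | zero => simp
    | succ k ih =>
      convert add_mem (S.shiftIdeal_mul_right hrev hcomp ih (g + p))
        (S.shiftIdeal_mul_left hrev hcomp hp (g ^ k)) using 1
      rw [pow_succ, pow_succ]
      noncomm_ring
  obtain ⟨k, hk⟩ := hg
  have hk' := h k
  rw [hk, sub_zero] at hk'
  obtain ⟨l, hl⟩ := S.isNilpotent_of_mem hr hk'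
  exact ⟨k * l, by rw [pow_mul, hl]⟩

/-! ### The two implications -/

theorem isNilpotent_sum (S : SkewPBW R A n) (hrev : IsReversible R)
    (hcomp : S.SigmaDeltaCompatible) {ι' : Type*} (s : Finset ι') (a : ι' → R)
    (X : ι' → Fin n → ℕ) (h : ∀ i, IsNilpotent (a i)) :
    IsNilpotent (∑ i ∈ s, S.ι (a i) * S.mono (X i)) := by
  classical
  induction s using Finset.induction_on with
  | empty => simp
  | insert i s hi ih =>
    rw [Finset.sum_insert hi, add_comm]
    exact S.isNilpotent_add hrev hcomp (h i) ih
      (S.shiftIdeal_mul_right hrev hcomp (S.mem_shiftIdeal _) _)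

theorem isNilpotent_leading (S : SkewPBW R A n) (hcomp : S.SigmaDeltaCompatible)
    (hc : S.CCentral) {f : A} (hf : IsNilpotent f) {α : Fin n → ℕ}
    (hα : ∀ γ, key α < key γ → S.coef f γ = 0) : IsNilpotent (S.coef f α) := by
  -- The leading coefficient of `f ^ k` differs from `(S.coef f α) ^ k` by twists and units, so only
  -- the comparison of left annihilators is retained.
  have h : ∀ k : ℕ, (∀ δ, key (k • α) < key δ → S.coef (f ^ k) δ = 0) ∧
      ∀ s : R, s * S.coef (f ^ k) (k • α) = 0 → s * S.coef f α ^ k = 0 := by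
    intro k
    induction k with
    | zero =>
      have h1 : S.coef (1 : A) = Finsupp.single 0 1 := by
        rw [← S.coef_term, map_one S.ι, one_mul]
        simp [mono]
      refine ⟨fun δ hδ => ?_, fun s hs => ?_⟩
      · rw [pow_zero, h1, Finsupp.single_apply, if_neg]
        rintro rfl
        simp at hδ
      · simpa [h1] using hs
    | succ k ih =>
      obtain ⟨h1, u, hu, h2⟩ := S.coef_mul hc hα ih.1
      rw [← pow_succ', add_comm α, ← succ_nsmul] at h1 h2
      refine ⟨h1, fun s hs => ?_⟩
      rw [h2, ← mul_assoc, hu.mul_left_eq_zero, ← mul_assoc, S.mul_sg hcomp.1] at hs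
      rw [pow_succ', ← mul_assoc]
      exact ih.2 _ hs
  obtain ⟨k, hk⟩ := hf
  exact ⟨k, by simpa using (h k).2 1 (by rw [hk]; simp)⟩

theorem isNilpotent_coef (S : SkewPBW R A n) (hrev : IsReversible R)
    (hcomp : S.SigmaDeltaCompatible) (hc : S.CCentral) {f : A} (hf : IsNilpotent f)
    (β : Fin n → ℕ) : IsNilpotent (S.coef f β) := by
  induction hN : (S.coef f).support.card using Nat.strong_induction_on generalizing f with
  | _ N ih =>
    by_cases hne : (S.coef f).support.Nonempty
    · obtain ⟨α, hα, hmax⟩ := Finset.exists_max_image _ key hne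
      have hlead : IsNilpotent (S.coef f α) := S.isNilpotent_leading hcomp hc hf fun γ hγ => by
        by_contra h
        exact absurd (hmax γ (Finsupp.mem_support_iff.2 h)) (not_le.2 hγ)
      have hmem := neg_mem (S.shiftIdeal_mul_right hrev hcomp
        (S.mem_shiftIdeal (S.coef f α)) (S.mono α))
      have hg := S.isNilpotent_add hrev hcomp hlead hf hmem
      have hcoef : S.coef (f + -(S.ι (S.coef f α) * S.mono α)) = (S.coef f).erase α := by
        rw [map_add, map_neg, coef_term, ← sub_eq_add_neg, Finsupp.erase_eq_sub_single]
      by_cases hβ : β = α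
      · rwa [hβ]
      · have := ih _ (by
          rw [← hN]
          refine Finset.card_lt_card ?_
          rw [hcoef, Finsupp.support_erase]
          exact Finset.erase_ssubset hα) hg rfl
        rwa [hcoef, Finsupp.erase_ne hβ] at this
    · rw [Finset.not_nonempty_iff_eq_empty, Finsupp.support_eq_empty] at hne
      simp [hne]

end SkewPBW

/-- Let `A` be a skew PBW extension of a reversible, `(Σ,Δ)`-compatible
ring `R`, with the constants `c_{i,j}` of condition (iv) central in `R`.  An element
`f = a₀ + a₁X₁ + ⋯ + aₘXₘ` of `A` (the `Xᵢ` pairwise distinct standard monomials)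
is nilpotent in `A` iff every coefficient `aᵢ` is nilpotent in `R`. -/
theorem skewPBW_nilpotent_iff_coeffs_nilpotent {R A : Type*} [Ring R] [Ring A] {n : ℕ}
    (S : SkewPBW R A n) (hrev : IsReversible R)
    (hcomp : S.SigmaDeltaCompatible) (hc : S.CCentral)
    (m : ℕ) (a : Fin (m + 1) → R) (X : Fin (m + 1) → Fin n → ℕ)
    (hX : Function.Injective X) :
    IsNilpotent (∑ i, S.ι (a i) * S.mono (X i)) ↔ ∀ i, IsNilpotent (a i) := by
  constructor
  · intro h i
    have hi := S.isNilpotent_coef hrev hcomp hc h (X i)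
    rw [map_sum, Finsupp.finsetSum_apply, Finset.sum_eq_single i] at hi
    · rwa [SkewPBW.coef_term, Finsupp.single_eq_same] at hi
    · intro j _ hj
      rw [SkewPBW.coef_term, Finsupp.single_eq_of_ne' (hX.ne hj)]
    · simp
  · exact S.isNilpotent_sum hrev hcomp Finset.univ a X
end

section
/- Let R be a ring equipped with a family Σ = {σ_1,…,σ_n} of ring endomorphisms and a family Δ = {δ_1,…,δ_n} of maps with each δ_i a σ_i-derivation, and suppose R is (Σ,Δ)-compatible and reversible. If a, b ∈ R and ab is nilpotent, then for every finite composition g = f_1∘f_2∘⋯∘f_k where each f_l is one of the maps σ_1,…,σ_n, δ_1,…,δ_n (in any order and with repetitions allowed), the element a·g(b) is nilpotent in R. -/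
/-!
The left annihilator controls everything. Compatibility says that each `f = σᵢ` or `f = δᵢ` satisfies
`x * b = 0 → x * f b = 0` for all `x` (take the multi-index with a single entry `1`), and this
implication chains along a composition `g`, so `c = g b` satisfies `x * b = 0 → x * c = 0`.
In a reversible ring `x * b * y = 0` gives `y * x * b = 0`, hence `y * x * c = 0`, hence
`x * c * y = 0`. Thus in the word `(ab)(ab)⋯(ab) = 0` each letter `b` may be replaced by `c`,
one at a time, which yields `(a * c) ^ k = 0` with the same exponent
(`mul_pow_eq_zero_of_annihilator`).
-/

open scoped BigOperators

/-- The generalization of `iterPow_single` to an arbitrary duplicate-free list of indices, in the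
form needed for induction on the list. -/
lemma foldr_iterate_single {α : Type*} {n : ℕ} (f : Fin n → α → α) (i : Fin n) :
    ∀ l : List (Fin n), l.Nodup →
      (l.map fun j => (f j)^[(Pi.single i 1 : Fin n → ℕ) j]).foldr (· ∘ ·) id
        = if i ∈ l then f i else id := by
  intro l
  induction l with
  | nil => simp
  | cons j l ih =>
    intro h
    rw [List.nodup_cons] at h
    rw [List.map_cons, List.foldr_cons, ih h.2]
    by_cases hij : i = j
    · subst hij
      simp [h.1]
    · simp [hij]

lemma iterPow_single {α : Type*} {n : ℕ} (f : Fin n → α → α) (i : Fin n) :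
    iterPow f (Pi.single i 1) = f i := by
  unfold iterPow
  rw [foldr_iterate_single f i _ (List.nodup_finRange n), if_pos (List.mem_finRange i)]

/-- In a reversible ring, an implication between left annihilators of `b` and `c` allows `b` to be
replaced by `c` in the middle of a vanishing product. -/
lemma mul_mul_eq_zero_of_annihilator {R : Type*} [Ring R] (hrev : IsReversible R) {b c : R}
    (h : ∀ x : R, x * b = 0 → x * c = 0) {x y : R} (hxy : x * b * y = 0) :
    x * c * y = 0 := by
  apply hrev
  rw [← mul_assoc]
  apply h
  rw [mul_assoc]
  exact hrev _ _ hxy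

lemma mul_pow_eq_zero_of_annihilator {R : Type*} [Ring R] (hrev : IsReversible R) {a b c : R}
    (h : ∀ x : R, x * b = 0 → x * c = 0) {k : ℕ} (hk : (a * b) ^ k = 0) :
    (a * c) ^ k = 0 := by
  -- The first `j` of the `k` occurrences of `b` have already been replaced by `c`.
  have key : ∀ j m : ℕ, (a * b) ^ (j + m) = 0 → (a * c) ^ j * (a * b) ^ m = 0 := by
    intro j
    induction j with
    | zero => intro m hm; simpa using hm
    | succ j ih =>
      intro m hm
      have h1 := ih (m + 1) (by rwa [← add_assoc, add_right_comm])
      have h2 : (a * c) ^ j * a * b * (a * b) ^ m = 0 := by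
        rw [pow_succ'] at h1
        simpa only [mul_assoc] using h1
      have h3 := mul_mul_eq_zero_of_annihilator hrev h h2
      rw [pow_succ]
      simpa only [mul_assoc] using h3
  simpa using key k 0 hk

/-- Let `R` be a ring with endomorphisms `σ₁,…,σₙ` and
`σᵢ`-derivations `δ₁,…,δₙ`, `(Σ,Δ)`-compatible and reversible.  If `ab` is
nilpotent, then for every finite composition `g = f₁ ∘ f₂ ∘ ⋯ ∘ f_k`, where each
`f_l` is one of `σ₁,…,σₙ,δ₁,…,δₙ` (in any order, repetitions allowed),
`a · g(b)` is nilpotent. -/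
theorem nilpotent_mul_composition_sigma_delta {R : Type*} [Ring R] {n : ℕ}
    (σ : Fin n → R →+* R) (δ : Fin n → R → R)
    (hδadd : ∀ (i : Fin n) (r s : R), δ i (r + s) = δ i r + δ i s)
    (hδleib : ∀ (i : Fin n) (r s : R), δ i (r * s) = σ i r * δ i s + δ i r * s)
    (hSig : ∀ (a b : R) (α : Fin n → ℕ), a * iterPow (fun i => ⇑(σ i)) α b = 0 ↔ a * b = 0)
    (hDel : ∀ a b : R, a * b = 0 → ∀ β : Fin n → ℕ, a * iterPow δ β b = 0)
    (hrev : IsReversible R)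
    (a b : R) (hab : IsNilpotent (a * b))
    (fs : List (R → R))
    (hfs : ∀ f ∈ fs, (∃ i : Fin n, f = ⇑(σ i)) ∨ (∃ i : Fin n, f = δ i)) :
    IsNilpotent (a * (fs.foldr (· ∘ ·) id) b) := by
  have hg : ∀ x : R, x * b = 0 → x * (fs.foldr (· ∘ ·) id) b = 0 := by
    induction fs with
    | nil => intro x hx; simpa using hx
    | cons f fs ih =>
      intro x hx
      have h1 := ih (fun g hg => hfs g (List.mem_cons_of_mem _ hg)) x hx
      rw [List.foldr_cons, Function.comp_apply]
      rcases hfs f List.mem_cons_self with ⟨i, rfl⟩ | ⟨i, rfl⟩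
      · have h2 := (hSig x _ (Pi.single i 1)).2 h1
        rwa [iterPow_single] at h2
      · have h2 := hDel x _ h1 (Pi.single i 1)
        rwa [iterPow_single] at h2
  obtain ⟨k, hk⟩ := hab
  exact ⟨k, mul_pow_eq_zero_of_annihilator hrev hg hk⟩
end
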